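/- Let T be the absolute model companion of a τ-theory S, and let ψ be a Π₂-sentence such that S + ψ is consistent. Then T + ψ is consistent. -/

import Mathlib

open FirstOrder FirstOrder.Language

universe u v w

namespace ModelCompanionship

variable {L : FirstOrder.Language.{u, v}}

/-- Existentially quantify away the last `k` free variables of a bounded formula. -/
def exsN : ∀ {n k : ℕ}, L.BoundedFormula Empty (n + k) → L.BoundedFormula Empty n
  | _, 0, φ => φ
  | _, _ + 1, φ => exsN φ.ex

/-- A sentence is universal if it is of the form `∀ x̄, ψ` with `ψ` quantifier-free. -/
def IsUniversalSentence (φ : L.Sentence) : Prop :=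
  ∃ (n : ℕ) (ψ : L.BoundedFormula Empty n), ψ.IsQF ∧ φ = ψ.alls

/-- A sentence is Π₂ if it is of the form `∀ x̄ ∃ ȳ, ψ` with `ψ` quantifier-free. -/
def IsPi2Sentence (φ : L.Sentence) : Prop :=
  ∃ (n k : ℕ) (ψ : L.BoundedFormula Empty (n + k)), ψ.IsQF ∧ φ = (exsN ψ).alls

/-- `T_∀`: the universal consequences of `T`. -/
def univFragment (T : L.Theory) : L.Theory :=
  {φ | IsUniversalSentence φ ∧ T ⊨ᵇ φ}

/-- Boolean combinations of universal sentences. -/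
inductive IsBCU : L.Sentence → Prop
  | of_univ {φ} : IsUniversalSentence φ → IsBCU φ
  | not {φ} : IsBCU φ → IsBCU φ.not
  | sup {φ ψ} : IsBCU φ → IsBCU ψ → IsBCU (φ ⊔ ψ)

/-- `T_{∀∨∃}`: the consequences of `T` that are boolean combinations of universal
sentences. -/
def bcuFragment (T : L.Theory) : L.Theory :=
  {φ | IsBCU φ ∧ T ⊨ᵇ φ}

/-- An embedding is Σ₁-elementary if existential formulas with parameters in the
domain transfer down from the codomain. -/
def IsSigma1Map {M : Type*} {N : Type*} [L.Structure M] [L.Structure N]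
    (f : M ↪[L] N) : Prop :=
  ∀ (m n : ℕ) (φ : L.BoundedFormula (Fin m) n), φ.IsQF →
    ∀ v : Fin m → M, (φ.exs).Realize ((f : M → N) ∘ v) → (φ.exs).Realize v

/-- An embedding is elementary: it preserves all first-order formulas with parameters. -/
def IsElementaryMap {M : Type*} {N : Type*} [L.Structure M] [L.Structure N]
    (f : M ↪[L] N) : Prop :=
  ∀ (m : ℕ) (φ : L.Formula (Fin m)) (v : Fin m → M),
    φ.Realize ((f : M → N) ∘ v) ↔ φ.Realize v

/-- `M` is `T`-existentially closed. -/
def IsEC (T : L.Theory) (M : Type w) [L.Structure M] : Prop :=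
  (∃ N : Theory.ModelType.{u, v, max u v w} T, Nonempty (M ↪[L] N)) ∧
    ∀ (P : Theory.ModelType.{u, v, max u v w} T) (f : M ↪[L] P), IsSigma1Map f

/-- A theory is model complete if every embedding between its models is elementary. -/
def IsModelComplete (T : L.Theory) : Prop :=
  ∀ (M N : Theory.ModelType.{u, v, max u v} T) (f : M ↪[L] N), IsElementaryMap f

/-- `R` is a model companion of `T`. -/
def IsModelCompanion (R T : L.Theory) : Prop :=
  IsModelComplete R ∧ univFragment R = univFragment T

/-- `R` is an absolute model companion (AMC) of `T`. -/
def IsAMC (R T : L.Theory) : Prop :=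
  IsModelComplete R ∧ bcuFragment R = bcuFragment T

theorem isExistential_exsN : ∀ {k n : ℕ} (φ : L.BoundedFormula Empty (n + k)),
    φ.IsExistential → (exsN φ).IsExistential
  | 0, _, _, h => h
  | _ + 1, _, φ, h => isExistential_exsN φ.ex h.ex

theorem isQF_restrictFreeVar {α β : Type*} [DecidableEq α] {n : ℕ}
    {φ : L.BoundedFormula α n} (h : φ.IsQF) (f : φ.freeVarFinset → β) :
    (φ.restrictFreeVar f).IsQF := by
  induction h with
  | falsum => exact .falsum
  | of_isAtomic h =>
    cases h with
    | equal t₁ t₂ => exact .of_isAtomic (.equal _ _)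
    | rel R ts => exact .of_isAtomic (.rel _ _)
  | imp h₁ h₂ ih₁ ih₂ => exact .imp (ih₁ _) (ih₂ _)

theorem exists_realize_of_univ {A B : Type*} [L.Structure A] [L.Structure B] [Nonempty B]
    (hAB : ∀ φ : L.Sentence, IsUniversalSentence φ → B ⊨ φ → A ⊨ φ)
    {α : Type*} (φ : L.Formula α) (hφ : φ.IsQF) (v : α → A) (hv : φ.Realize v) :
    ∃ w : α → B, φ.Realize w := by
  classical
  by_contra! hcon
  let χ : L.Formula (Empty ⊕ φ.not.freeVarFinset) :=
    Formula.relabel Sum.inr (BoundedFormula.restrictFreeVar φ.not id)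
  have hχ : χ.IsQF := by
    exact (isQF_restrictFreeVar hφ.not id).relabel _
  have hu : IsUniversalSentence (χ.iAlls φ.not.freeVarFinset) :=
    ⟨_, _, hχ.relabel _, rfl⟩
  have hB : B ⊨ χ.iAlls φ.not.freeVarFinset := by
    rw [Sentence.Realize, Formula.realize_iAlls]
    intro i
    rw [Formula.realize_relabel]
    let w : α → B := fun a =>
      if h : a ∈ φ.not.freeVarFinset then i ⟨a, h⟩ else Classical.arbitrary B
    refine (BoundedFormula.realize_restrictFreeVar w ?_).2 ?_
    · intro a
      have : w a = i a := dif_pos a.2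
      rw [this]; rfl
    · exact hcon w
  have hA := hAB _ hu hB
  rw [Sentence.Realize, Formula.realize_iAlls] at hA
  have hA := hA (fun a => v a)
  rw [Formula.realize_relabel] at hA
  have := (BoundedFormula.realize_restrictFreeVar v (by intro a; rfl)).1 hA
  exact this hv

/-- The quantifier-free diagram of a structure. -/
def qfDiagram (L : FirstOrder.Language.{u, v}) (A : Type w) [L.Structure A] : L[[A]].Theory :=
  {σ | BoundedFormula.IsQF (Formula.equivSentence.symm σ : L.Formula A) ∧
    (Formula.equivSentence.symm σ : L.Formula A).Realize (id : A → A)}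

theorem qfDiagram_finite (A : Type w) [L.Structure A] (F : Finset L[[A]].Sentence)
    (B : Type*) [L.Structure B] :
    ∃ φ : L.Formula A, φ.IsQF ∧ φ.Realize (id : A → A) ∧
      ∀ w : A → B, φ.Realize w → ∀ σ ∈ F, σ ∈ qfDiagram L A →
        (Formula.equivSentence.symm σ : L.Formula A).Realize w := by
  classical
  induction F using Finset.induction_on with
  | empty => exact ⟨⊤, BoundedFormula.IsQF.top, by simp [Formula.Realize], by simp⟩
  | insert σ F _ ih =>
    obtain ⟨φ, h1, h2, h3⟩ := ih
    by_cases hσ : σ ∈ qfDiagram L A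
    · refine ⟨φ ⊓ Formula.equivSentence.symm σ, h1.inf hσ.1,
        Formula.realize_inf.2 ⟨h2, hσ.2⟩, ?_⟩
      intro w hw τ hτ hd
      have hw := Formula.realize_inf.1 hw
      rcases Finset.mem_insert.1 hτ with rfl | hτ
      · exact hw.2
      · exact h3 w hw.1 τ hτ hd
    · refine ⟨φ, h1, h2, ?_⟩
      intro w hw τ hτ hd
      rcases Finset.mem_insert.1 hτ with rfl | hτ
      · exact absurd hd hσ
      · exact h3 w hw τ hτ hd

theorem exists_embedding_of_univ {A B : Type (max u v)} [L.Structure A] [L.Structure B]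
    [Nonempty B]
    (hAB : ∀ φ : L.Sentence, IsUniversalSentence φ → B ⊨ φ → A ⊨ φ) :
    ∃ C : Theory.ModelType.{u, v, max u v} (L.completeTheory B), Nonempty (A ↪[L] C) := by
  classical
  have hsat : Theory.IsSatisfiable
      ((L.lhomWithConstants A).onTheory (L.completeTheory B) ∪ qfDiagram L A) := by
    rw [Theory.isSatisfiable_iff_isFinitelySatisfiable]
    intro F hF
    obtain ⟨φ, h1, h2, h3⟩ := qfDiagram_finite A F B
    obtain ⟨w, hw⟩ := exists_realize_of_univ hAB φ h1 id h2
    letI : (constantsOn A).Structure B := constantsOn.structure w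
    have : B ⊨ (F : L[[A]].Theory) := by
      refine ⟨fun σ hσ => ?_⟩
      rcases hF hσ with h | h
      · have hm : B ⊨ (L.lhomWithConstants A).onTheory (L.completeTheory B) :=
          (LHom.onTheory_model _ _).2 inferInstance
        exact hm.realize_of_mem _ h
      · exact (Formula.realize_equivSentence_symm B σ w).1 (h3 w hw σ hσ h)
    exact Theory.Model.isSatisfiable B
  obtain ⟨C⟩ := hsat
  letI : L.Structure C := (L.lhomWithConstants A).reduct C
  haveI : (L.lhomWithConstants A).IsExpansionOn C := LHom.isExpansionOn_reduct _ _
  have hC : C ⊨ L.completeTheory B :=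
    (LHom.onTheory_model (L.lhomWithConstants A) _).1
      (Theory.Model.mono C.is_model Set.subset_union_left)
  let c : A → C := fun a => (L.con a : C)
  have key : ∀ φ : L.Formula A, φ.IsQF → φ.Realize (id : A → A) → φ.Realize c := by
    intro φ hφ hr
    refine (Formula.realize_equivSentence C φ).1 ?_
    refine C.is_model.realize_of_mem _ (Or.inr ?_)
    simpa [qfDiagram] using ⟨hφ, hr⟩
  have key' : ∀ φ : L.Formula A, φ.IsQF → (φ.Realize c ↔ φ.Realize (id : A → A)) := by
    intro φ hφ
    refine ⟨fun h => ?_, key φ hφ⟩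
    by_contra hn
    exact key φ.not hφ.not hn h
  refine ⟨⟨C⟩, ⟨⟨⟨c, ?_⟩, ?_, ?_⟩⟩⟩
  · intro a b hab
    have := (key' ((Term.var a : L.Term A).equal (Term.var b))
      (BoundedFormula.IsAtomic.equal _ _).isQF).1 (by simpa using hab)
    simpa using this
  · intro n f x
    have := (key' ((Term.func f fun i => Term.var (x i) : L.Term A).equal
      (Term.var (Structure.funMap f x)))
      (BoundedFormula.IsAtomic.equal _ _).isQF).2 (by simp)
    simp only [Formula.realize_equal, Term.realize_func, Term.realize_var] at this
    exact this.symm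
  · intro n r x
    have := key' (r.formula fun i => (Term.var (x i) : L.Term A))
      (BoundedFormula.IsAtomic.rel _ _).isQF
    simp only [Formula.realize_rel, Term.realize_var] at this
    exact this

theorem exists_bcu_conj (F : Finset L.Sentence) (hF : ∀ φ ∈ F, IsBCU φ) :
    ∃ χ : L.Sentence, IsBCU χ ∧ ∀ (M : Type (max u v)) [L.Structure M],
      M ⊨ χ ↔ ∀ φ ∈ F, M ⊨ φ := by
  classical
  induction F using Finset.induction_on with
  | empty =>
    refine ⟨Formula.not (BoundedFormula.alls (n := 0) (⊥ : L.BoundedFormula Empty 0)),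
      .not (.of_univ ⟨0, ⊥, .falsum, rfl⟩), fun M _ => ?_⟩
    simp [Sentence.Realize, BoundedFormula.alls, Formula.Realize]
  | insert σ F _ ih =>
    obtain ⟨χ, h1, h2⟩ := ih fun φ h => hF φ (Finset.mem_insert_of_mem h)
    refine ⟨Formula.not (Formula.not σ ⊔ Formula.not χ),
      .not (.sup (.not (hF σ (Finset.mem_insert_self _ _))) (.not h1)), fun M _ => ?_⟩
    rw [Finset.forall_mem_insert, ← h2 M]
    simp only [Sentence.Realize, Formula.realize_not, Formula.realize_sup]
    tauto

theorem realize_relabel_toFormula {P : Type*} [L.Structure P] {n : ℕ}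
    (φ : L.BoundedFormula Empty n) (v : Empty → P) (xs : Fin n → P) :
    (φ.toFormula.relabel (Sum.elim Empty.elim id : Empty ⊕ Fin n → Fin n)).Realize xs ↔
      φ.Realize v xs := by
  rw [Formula.realize_relabel, BoundedFormula.realize_toFormula,
    Subsingleton.elim v ((xs ∘ Sum.elim Empty.elim id) ∘ Sum.inl)]
  rfl

/-- If `T` is the absolute model companion of `S` and `ψ` is a Π₂-sentence consistent
with `S`, then `ψ` is consistent with `T`. -/
theorem amc_pi2_consistent (T S : L.Theory) (h : IsAMC T S)
    (ψ : L.Sentence) (hψ : IsPi2Sentence ψ)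
    (hcon : Theory.IsSatisfiable (S ∪ {ψ})) :
    Theory.IsSatisfiable (T ∪ {ψ}) := by
  obtain ⟨hmc, hfr⟩ := h
  obtain ⟨n, k, θ, hθ, rfl⟩ := hψ
  obtain ⟨M⟩ := hcon
  have hMS : M ⊨ S := Theory.Model.mono M.is_model Set.subset_union_left
  have hMψ : M ⊨ (exsN θ).alls := M.is_model.realize_of_mem _ (Or.inr rfl)
  -- a model of `T` with the same universal theory as `M`
  have hsat : Theory.IsSatisfiable (T ∪ {φ | IsBCU φ ∧ M ⊨ φ}) := by
    classical
    rw [Theory.isSatisfiable_iff_isFinitelySatisfiable]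
    intro F hF
    obtain ⟨χ, hχ, hχF⟩ := exists_bcu_conj (F.filter fun φ => IsBCU φ ∧ M ⊨ φ)
      (fun φ h => (Finset.mem_filter.1 h).2.1)
    by_contra hns
    have hT : T ⊨ᵇ Formula.not χ := by
      rw [Theory.models_sentence_iff]
      intro N hN
      apply hns
      have hN' := (hχF N).1 hN
      have : N ⊨ (F : L.Theory) := by
        refine ⟨fun σ hσ => ?_⟩
        rcases hF hσ with h | h
        · exact N.is_model.realize_of_mem _ h
        · exact hN' σ (Finset.mem_filter.2 ⟨hσ, h⟩)
      exact Theory.Model.isSatisfiable N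
    have hS : Formula.not χ ∈ bcuFragment S := by
      rw [← hfr]
      exact ⟨hχ.not, hT⟩
    have := hS.2.realize_sentence M
    exact this ((hχF M).2 fun φ h => (Finset.mem_filter.1 h).2.2)
  obtain ⟨N⟩ := hsat
  have hNT : N ⊨ T := Theory.Model.mono N.is_model Set.subset_union_left
  have hNM : ∀ φ : L.Sentence, IsUniversalSentence φ → (M ⊨ φ ↔ N ⊨ φ) := by
    intro φ hφ
    refine ⟨fun h => N.is_model.realize_of_mem _ (Or.inr ⟨.of_univ hφ, h⟩), fun h => ?_⟩
    by_contra hn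
    exact N.is_model.realize_of_mem (Formula.not φ) (Or.inr ⟨.not (.of_univ hφ), hn⟩) h
  obtain ⟨M₁, ⟨f⟩⟩ := exists_embedding_of_univ (A := N) (B := M) fun φ hφ => (hNM φ hφ).1
  have hM₁ : ∀ φ : L.Sentence, M ⊨ φ → M₁ ⊨ φ := fun φ hφ =>
    M₁.is_model.realize_of_mem φ hφ
  have hM₁' : ∀ φ : L.Sentence, M₁ ⊨ φ → M ⊨ φ := fun φ hφ => by
    by_contra hn
    exact hM₁ (Formula.not φ) hn hφ
  obtain ⟨N₂, ⟨g⟩⟩ := exists_embedding_of_univ (A := M₁) (B := N) fun φ hφ h =>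
    hM₁ _ ((hNM φ hφ).2 h)
  have hN₂T : N₂ ⊨ T := ⟨fun φ hφ => N₂.is_model.realize_of_mem φ (hNT.realize_of_mem φ hφ)⟩
  have hel := hmc (Theory.ModelType.of T N) (Theory.ModelType.of T N₂) (g.comp f)
  have hNψ : N ⊨ (exsN θ).alls := by
    rw [Sentence.Realize, BoundedFormula.realize_alls]
    intro xs
    have h1 := hM₁ _ hMψ
    rw [Sentence.Realize, BoundedFormula.realize_alls] at h1
    have h2 := (isExistential_exsN θ hθ.isExistential).realize_embedding g (h1 (f ∘ xs))
    exact (realize_relabel_toFormula (exsN θ) default xs).1 ((hel n _ xs).1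
      ((realize_relabel_toFormula (exsN θ) (g ∘ default) (g ∘ f ∘ xs)).2 h2))
  have : N ⊨ T ∪ {(exsN θ).alls} := by
    refine ⟨fun σ hσ => ?_⟩
    rcases hσ with h | h
    · exact hNT.realize_of_mem _ h
    · rw [Set.mem_singleton_iff.1 h]; exact hNψ
  exact Theory.Model.isSatisfiable N
end ModelCompanionship
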